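/- arXiv:math/0610523 — 8 statements merged into one kernel-verified Lean document; each statement's English description precedes it below -/
import Mathlib

section
/- Let X be a square group. Then the function T := H∘P − id : X_ee → X_ee (that is, T(x) = H(P(x)) − x) is a group homomorphism and an involution: T(T(x)) = x for all x ∈ X_ee. -/
/-!
The cross effect of `T = H ∘ P - id` at `(x, y)` is that of `H` at `(P x, P y)`, because `id` is
additive; it vanishes, so `T` is additive. The relation `P (H (P x)) = P x + P x` says that
`P ∘ T = P`, whence `T (T x) = H (P x) - T x = x`.
-/

/-- The cross effect `(a|b)_H = H(a+b) - H(b) - H(a)` of a function `H` between groups. -/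
def crossEff {Xe Xee : Type*} [AddGroup Xe] [AddCommGroup Xee]
    (H : Xe → Xee) (a b : Xe) : Xee :=
  H (a + b) - H b - H a

/-- A square group structure on a (not necessarily abelian) group `Xe` and an abelian
group `Xee`, given by a homomorphism `P : Xee → Xe` and a quadratic map `H : Xe → Xee`. -/
structure IsSquareGroup {Xe Xee : Type*} [AddGroup Xe] [AddCommGroup Xee]
    (P : Xee →+ Xe) (H : Xe → Xee) : Prop where
  cross_add_left : ∀ a b c : Xe,
    crossEff H (a + b) c = crossEff H a c + crossEff H b c
  cross_add_right : ∀ a b c : Xe,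
    crossEff H a (b + c) = crossEff H a b + crossEff H a c
  cross_P_left : ∀ (x : Xee) (b : Xe), crossEff H (P x) b = 0
  cross_P_right : ∀ (a : Xe) (y : Xee), crossEff H a (P y) = 0
  P_cross : ∀ a b : Xe, P (crossEff H a b) = -a - b + a + b
  P_H_P : ∀ x : Xee, P (H (P x)) = P x + P x

theorem crossEff_eq_zero_iff {Xe Xee : Type*} [AddGroup Xe] [AddCommGroup Xee]
    {H : Xe → Xee} {a b : Xe} :
    crossEff H a b = 0 ↔ H (a + b) = H a + H b := by
  rw [crossEff, sub_sub, sub_eq_zero, add_comm (H b)]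

/-- The function `T = H ∘ P - id` of a square group, defined for arbitrary functions `P` and `H` so
that its additivity and its involutivity can be traced to separate properties of `P` and `H`. -/
def squareGroupT {Xe Xee : Type*} [AddGroup Xee] (P : Xee → Xe) (H : Xe → Xee) (x : Xee) : Xee :=
  H (P x) - x

theorem crossEff_squareGroupT {Xe Xee : Type*} [AddGroup Xe] [AddCommGroup Xee]
    (P : Xee →+ Xe) (H : Xe → Xee) (x y : Xee) :
    crossEff (squareGroupT P H) x y = crossEff H (P x) (P y) := by
  simp only [crossEff, squareGroupT, map_add]
  abel

theorem map_squareGroupT {Xe Xee : Type*} [AddGroup Xe] [AddGroup Xee]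
    {P : Xee →+ Xe} {H : Xe → Xee} {x : Xee} (hPHP : P (H (P x)) = P x + P x) :
    P (squareGroupT P H x) = P x := by
  rw [squareGroupT, map_sub, hPHP, add_sub_cancel_right]

theorem squareGroupT_involutive {Xe Xee : Type*} [AddCommGroup Xee]
    {P : Xee → Xe} {H : Xe → Xee} (hPT : ∀ x, P (squareGroupT P H x) = P x) :
    Function.Involutive (squareGroupT P H) := fun x =>
  calc
    squareGroupT P H (squareGroupT P H x)
      = H (P (squareGroupT P H x)) - squareGroupT P H x := rfl
    _ = H (P x) - (H (P x) - x) := by rw [hPT, squareGroupT]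
    _ = x := sub_sub_cancel _ _

theorem squareGroup_T_hom_involution_general {Xe Xee : Type*} [AddGroup Xe] [AddCommGroup Xee]
    (P : Xee →+ Xe) (H : Xe → Xee) (hcross : ∀ x y : Xee, crossEff H (P x) (P y) = 0)
    (hPHP : ∀ x : Xee, P (H (P x)) = P x + P x) :
    (∀ x y : Xee, squareGroupT P H (x + y) = squareGroupT P H x + squareGroupT P H y) ∧
      Function.Involutive (squareGroupT P H) :=
  ⟨fun x y => crossEff_eq_zero_iff.mp ((crossEff_squareGroupT P H x y).trans (hcross x y)),
    squareGroupT_involutive fun x => map_squareGroupT (hPHP x)⟩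

/-- For a square group `X`, the function `T = H∘P − id : X_ee → X_ee` is a
group homomorphism and an involution. -/
theorem squareGroup_T_hom_involution {Xe Xee : Type*} [AddGroup Xe] [AddCommGroup Xee]
    (P : Xee →+ Xe) (H : Xe → Xee) (hsq : IsSquareGroup P H) :
    let T : Xee → Xee := fun v => H (P v) - v
    (∀ x y : Xee, T (x + y) = T x + T y) ∧ (∀ x : Xee, T (T x) = x) :=
  squareGroup_T_hom_involution_general P H (fun x y => hsq.cross_P_left x (P y)) hsq.P_H_P
end

section
/- Let X be a square group and set T = H∘P − id on X_ee. Then the function Δ : X_e → X_ee defined by Δ(x) = (x|x)_H − H(x) + T(H(x)) is a group homomorphism and satisfies T(Δ(x)) = −Δ(x) for all x ∈ X_e. -/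
theorem apply_add_eq_crossEff_add {Xe Xee : Type*} [AddGroup Xe] [AddCommGroup Xee]
    (H : Xe → Xee) (a b : Xe) : H (a + b) = crossEff H a b + H a + H b := by
  unfold crossEff
  abel

namespace IsSquareGroup

variable {Xe Xee : Type*} [AddGroup Xe] [AddCommGroup Xee] {P : Xee →+ Xe} {H : Xe → Xee}

theorem H_add_P (h : IsSquareGroup P H) (a : Xe) (v : Xee) : H (a + P v) = H a + H (P v) := by
  rw [apply_add_eq_crossEff_add H, h.cross_P_right, zero_add]

theorem H_P_add (h : IsSquareGroup P H) (v w : Xee) : H (P (v + w)) = H (P v) + H (P w) := by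
  rw [map_add, h.H_add_P]

theorem H_P_H_P (h : IsSquareGroup P H) (v : Xee) : H (P (H (P v))) = H (P v) + H (P v) := by
  rw [h.P_H_P, h.H_add_P]

theorem add_add_P_crossEff (h : IsSquareGroup P H) (a b : Xe) :
    b + a + P (crossEff H a b) = a + b := by
  rw [h.P_cross]
  simp only [sub_eq_add_neg, add_assoc, add_neg_cancel_left]

theorem H_P_crossEff (h : IsSquareGroup P H) (a b : Xe) :
    H (P (crossEff H a b)) = crossEff H a b - crossEff H b a :=
  calc H (P (crossEff H a b))
      = H (b + a + P (crossEff H a b)) - H (b + a) := by rw [h.H_add_P, add_sub_cancel_left]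
    _ = H (a + b) - H (b + a) := by rw [h.add_add_P_crossEff]
    _ = crossEff H a b - crossEff H b a := by
        unfold crossEff
        abel

/-- The involution `T = H ∘ P - id` of `Xee`, bundled as an additive endomorphism so that its
additivity is available as `map_add`. -/
def involution (h : IsSquareGroup P H) : Xee →+ Xee :=
  AddMonoidHom.mk' (fun v => H (P v)) h.H_P_add - AddMonoidHom.id Xee

theorem involution_apply (h : IsSquareGroup P H) (v : Xee) : h.involution v = H (P v) - v := rfl

theorem involutive_involution (h : IsSquareGroup P H) : Function.Involutive h.involution := by
  intro v
  calc h.involution (h.involution v)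
      = h.involution (H (P v)) - h.involution v := by
        rw [← map_sub, h.involution_apply v]
    _ = H (P v) - (H (P v) - v) := by
        rw [h.involution_apply (H (P v)), h.H_P_H_P, add_sub_cancel_right, h.involution_apply v]
    _ = v := sub_sub_cancel (H (P v)) v

theorem involution_crossEff (h : IsSquareGroup P H) (a b : Xe) :
    h.involution (crossEff H a b) = -crossEff H b a := by
  rw [h.involution_apply, h.H_P_crossEff, sub_sub_cancel_left]

theorem crossEff_add_self (h : IsSquareGroup P H) (x y : Xe) :
    crossEff H (x + y) (x + y) =
      crossEff H x x + crossEff H x y + (crossEff H y x + crossEff H y y) := by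
  rw [h.cross_add_left, h.cross_add_right, h.cross_add_right]

/-- The map `Δ` of a square group, bundled as a homomorphism, with `T` encoded as `involution`. -/
def delta (h : IsSquareGroup P H) : Xe →+ Xee :=
  AddMonoidHom.mk' (fun x => crossEff H x x - H x + h.involution (H x)) fun x y => by
    rw [h.crossEff_add_self, apply_add_eq_crossEff_add H x y, map_add, map_add,
      h.involution_crossEff]
    abel

theorem delta_apply (h : IsSquareGroup P H) (x : Xe) :
    h.delta x = crossEff H x x - H x + h.involution (H x) := rfl

theorem involution_delta (h : IsSquareGroup P H) (x : Xe) :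
    h.involution (h.delta x) = -h.delta x := by
  rw [h.delta_apply, map_add, map_sub, h.involution_crossEff, h.involutive_involution]
  abel

end IsSquareGroup

/-- For a square group `X` with `T = H∘P − id`, the function
`Δ(x) = (x|x)_H − H(x) + T(H(x))` is a group homomorphism `X_e → X_ee` and satisfies
`T(Δ(x)) = −Δ(x)`. -/
theorem squareGroup_Delta_hom {Xe Xee : Type*} [AddGroup Xe] [AddCommGroup Xee]
    (P : Xee →+ Xe) (H : Xe → Xee) (hsq : IsSquareGroup P H) :
    let T : Xee → Xee := fun v => H (P v) - v
    let Δ : Xe → Xee := fun x => crossEff H x x - H x + T (H x)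
    (∀ x y : Xe, Δ (x + y) = Δ x + Δ y) ∧ (∀ x : Xe, T (Δ x) = -Δ x) :=
  ⟨map_add hsq.delta, hsq.involution_delta⟩
end

section
/- Let X be a square group. Then the image of P : X_ee → X_e is contained in the center of X_e, every commutator −a−b+a+b of elements a,b ∈ X_e is central, and consequently X_e is a nilpotent group of class at most 2 (all triple commutators vanish). -/
theorem neg_sub_add_add_eq_zero_iff_addCommute {G : Type*} [AddGroup G] {a b : G} :
    -a - b + a + b = 0 ↔ AddCommute a b := by
  rw [sub_eq_add_neg, ← neg_add_rev, add_assoc, neg_add_eq_zero, eq_comm, addCommute_iff_eq]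

section CommutatorLift

-- For a square group, `ω` is the cross effect `(·|·)_H`.
variable {G M F : Type*} [AddGroup G] [Zero M] [FunLike F M G] [ZeroHomClass F M G]
  {P : F} {ω : G → G → M}

theorem addCommute_map_of_commutator_lift
    (map_bracket : ∀ a b : G, P (ω a b) = -a - b + a + b)
    (bracket_map_left : ∀ (x : M) (b : G), ω (P x) b = 0) (x : M) (b : G) :
    AddCommute (P x) b := by
  rw [← neg_sub_add_add_eq_zero_iff_addCommute, ← map_bracket, bracket_map_left, map_zero]

theorem squareGroup_nil_two_general
    (map_bracket : ∀ a b : G, P (ω a b) = -a - b + a + b)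
    (bracket_map_left : ∀ (x : M) (b : G), ω (P x) b = 0) :
    (∀ (x : M) (b : G), P x + b = b + P x) ∧
    (∀ a b c : G, (-a - b + a + b) + c = c + (-a - b + a + b)) ∧
    (∀ a b c : G, -(-a - b + a + b) - c + (-a - b + a + b) + c = 0) := by
  have image_central : ∀ (x : M) (b : G), AddCommute (P x) b :=
    addCommute_map_of_commutator_lift map_bracket bracket_map_left
  have commutator_central (a b c : G) : AddCommute (-a - b + a + b) c :=
    map_bracket a b ▸ image_central (ω a b) c
  exact ⟨image_central, commutator_central, fun a b c =>
    neg_sub_add_add_eq_zero_iff_addCommute.mpr (commutator_central a b c)⟩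

end CommutatorLift

/-- In a square group `X`, the image of `P` is central in `X_e`, all
commutators `−a−b+a+b` are central, and all triple commutators vanish, so `X_e` is
nilpotent of class at most 2. -/
theorem squareGroup_nil_two {Xe Xee : Type*} [AddGroup Xe] [AddCommGroup Xee]
    (P : Xee →+ Xe) (H : Xe → Xee) (hsq : IsSquareGroup P H) :
    (∀ (x : Xee) (b : Xe), P x + b = b + P x) ∧
    (∀ a b c : Xe, (-a - b + a + b) + c = c + (-a - b + a + b)) ∧
    (∀ a b c : Xe, -(-a - b + a + b) - c + (-a - b + a + b) + c = 0) := by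
  exact squareGroup_nil_two_general hsq.P_cross hsq.cross_P_left
end

section
/- Let B be a pair algebra and let a,b,c ∈ h₀B be homogeneous of degrees p,q,r with a·b = 0 and b·c = 0. For any representatives ā ∈ B_{p,0}, b̄ ∈ B_{q,0}, c̄ ∈ B_{r,0} of a,b,c there exist e ∈ B_{p+q,1} and f ∈ B_{q+r,1} with ∂(e) = ā·b̄ and ∂(f) = b̄·c̄; for any such choices the element −e·c̄ + ā·f lies in h₁B_{p+q+r} = Ker(∂) in degree p+q+r; and the set ⟨a,b,c⟩ of all elements arising in this way from all choices of ā, b̄, c̄, e, f (the Massey product) is a coset of the subgroup (h₁B_{p+q})·c + a·(h₁B_{q+r}) of h₁B_{p+q+r}. -/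
/-!
With the representatives fixed, `(e, f) ↦ −e·c̄ + ā·f` is additive, and the admissible pairs
`(e, f)` form a fibre of `∂ × ∂`, i.e. a coset of `Ker ∂ × Ker ∂`; so the values form a coset of
the image of this kernel. Replacing `ā`, `b̄` or `c̄` by another representative can be compensated
in `(e, f)` without changing the value:

* for `ā + ∂u`, replace `e` by `e + u·b̄`, since `∂u·f = u·∂f = u·(b̄·c̄)`;
* for `b̄ + ∂v`, replace `(e, f)` by `(e + ā·v, f + v·c̄)`, since `(ā·v)·c̄ = ā·(v·c̄)`;
* for `c̄ + ∂w`, replace `f` by `f + b̄·w`, since `e·∂w = ∂e·w = (ā·b̄)·w`.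
-/

/-- An ℕ-graded pair algebra: an ℕ-graded ring `B_{*,0}` (given by the family `B0` with
degreewise-defined multiplication `mul`), an ℕ-graded `B_{*,0}`-bimodule `B_{*,1}` (the
family `B1` with actions `smul`, `smulr`) and a bimodule homomorphism `∂ : B_{*,1} → B_{*,0}`
satisfying `∂(a)·b = a·∂(b)`.  Multiplications are indexed by a proof `p + q = r` recording
the additivity of degrees. -/
structure PairAlgebra (B0 B1 : ℕ → Type*)
    [∀ n, AddCommGroup (B0 n)] [∀ n, AddCommGroup (B1 n)] where
  d : ∀ n, B1 n →+ B0 n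
  mul : ∀ {p q r : ℕ}, p + q = r → B0 p → B0 q → B0 r
  smul : ∀ {p q r : ℕ}, p + q = r → B0 p → B1 q → B1 r
  smulr : ∀ {p q r : ℕ}, p + q = r → B1 p → B0 q → B1 r
  one : B0 0
  mul_add : ∀ {p q r : ℕ} (h : p + q = r) (x : B0 p) (y y' : B0 q),
    mul h x (y + y') = mul h x y + mul h x y'
  add_mul : ∀ {p q r : ℕ} (h : p + q = r) (x x' : B0 p) (y : B0 q),
    mul h (x + x') y = mul h x y + mul h x' y
  smul_add : ∀ {p q r : ℕ} (h : p + q = r) (x : B0 p) (s s' : B1 q),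
    smul h x (s + s') = smul h x s + smul h x s'
  add_smul : ∀ {p q r : ℕ} (h : p + q = r) (x x' : B0 p) (s : B1 q),
    smul h (x + x') s = smul h x s + smul h x' s
  smulr_add : ∀ {p q r : ℕ} (h : p + q = r) (s : B1 p) (x x' : B0 q),
    smulr h s (x + x') = smulr h s x + smulr h s x'
  add_smulr : ∀ {p q r : ℕ} (h : p + q = r) (s s' : B1 p) (x : B0 q),
    smulr h (s + s') x = smulr h s x + smulr h s' x
  one_mul : ∀ {q : ℕ} (x : B0 q), mul (Nat.zero_add q) one x = x
  mul_one : ∀ {p : ℕ} (x : B0 p), mul rfl x one = x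
  one_smul : ∀ {q : ℕ} (s : B1 q), smul (Nat.zero_add q) one s = s
  smulr_one : ∀ {p : ℕ} (s : B1 p), smulr rfl s one = s
  mul_assoc : ∀ {p q r : ℕ} (x : B0 p) (y : B0 q) (z : B0 r),
    mul rfl (mul rfl x y) z = mul (Nat.add_assoc p q r).symm x (mul rfl y z)
  mul_smul_assoc : ∀ {p q r : ℕ} (x : B0 p) (y : B0 q) (s : B1 r),
    smul rfl (mul rfl x y) s = smul (Nat.add_assoc p q r).symm x (smul rfl y s)
  smul_smulr_assoc : ∀ {p q r : ℕ} (x : B0 p) (s : B1 q) (y : B0 r),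
    smulr rfl (smul rfl x s) y = smul (Nat.add_assoc p q r).symm x (smulr rfl s y)
  smulr_mul_assoc : ∀ {p q r : ℕ} (s : B1 p) (y : B0 q) (z : B0 r),
    smulr rfl (smulr rfl s y) z = smulr (Nat.add_assoc p q r).symm s (mul rfl y z)
  d_smul : ∀ {p q r : ℕ} (h : p + q = r) (x : B0 p) (s : B1 q),
    d r (smul h x s) = mul h x (d q s)
  d_smulr : ∀ {p q r : ℕ} (h : p + q = r) (s : B1 p) (x : B0 q),
    d r (smulr h s x) = mul h (d p s) x
  smul_d : ∀ {p q r : ℕ} (h : p + q = r) (s : B1 p) (t : B1 q),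
    smul h (d p s) t = smulr h s (d q t)

variable {B0 B1 : ℕ → Type*} [∀ n, AddCommGroup (B0 n)] [∀ n, AddCommGroup (B1 n)]

/-- The Massey product set `⟨a,b,c⟩ ⊆ B1 (p+q+r)` of the classes of `a0`, `b0`, `c0`:
all elements `−e·c̄ + ā·f` where `ā = a0 + ∂u`, `b̄ = b0 + ∂v`, `c̄ = c0 + ∂w` range over
representatives and `∂e = ā·b̄`, `∂f = b̄·c̄`. -/
def masseySet (A : PairAlgebra B0 B1) (p q r : ℕ)
    (a0 : B0 p) (b0 : B0 q) (c0 : B0 r) : Set (B1 (p + q + r)) :=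
  {z | ∃ (u : B1 p) (v : B1 q) (w : B1 r) (e : B1 (p + q)) (f : B1 (q + r)),
    A.d (p + q) e = A.mul rfl (a0 + A.d p u) (b0 + A.d q v) ∧
    A.d (q + r) f = A.mul rfl (b0 + A.d q v) (c0 + A.d r w) ∧
    z = -(A.smulr rfl e (c0 + A.d r w)) +
        A.smul (Nat.add_assoc p q r).symm (a0 + A.d p u) f}

/-- The indeterminacy subgroup `(h₁B_{p+q})·c + a·(h₁B_{q+r}) ⊆ h₁B_{p+q+r}`. -/
def indetSet (A : PairAlgebra B0 B1) (p q r : ℕ)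
    (a0 : B0 p) (c0 : B0 r) : Set (B1 (p + q + r)) :=
  {z | ∃ (s : B1 (p + q)) (t : B1 (q + r)),
    A.d (p + q) s = 0 ∧ A.d (q + r) t = 0 ∧
    z = A.smulr rfl s c0 + A.smul (Nat.add_assoc p q r).symm a0 t}

section Fiber

open scoped Pointwise

variable {G H K : Type*} [AddGroup G] [AddZeroClass H] [AddGroup K]

theorem preimage_singleton_map_eq_vadd_ker (ψ : G →+ H) (x : G) :
    ψ ⁻¹' {ψ x} = x +ᵥ (ψ.ker : Set G) := by
  ext y
  rw [Set.mem_preimage, Set.mem_singleton_iff, ψ.eq_iff, Set.mem_vadd_set_iff_neg_vadd_mem,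
    vadd_eq_add, SetLike.mem_coe]

theorem image_preimage_singleton_map_eq_vadd_map_ker (φ : G →+ K) (ψ : G →+ H) (x : G) :
    φ '' (ψ ⁻¹' {ψ x}) = φ x +ᵥ (ψ.ker.map φ : Set K) := by
  rw [preimage_singleton_map_eq_vadd_ker, Set.image_vadd_distrib, AddSubgroup.coe_map]

end Fiber

namespace PairAlgebra

variable (A : PairAlgebra B0 B1) {p q r : ℕ}

/-- Left multiplication `s ↦ x·s` on the bimodule, as an additive map. -/
def smulHom (h : p + q = r) (x : B0 p) : B1 q →+ B1 r :=
  AddMonoidHom.mk' (A.smul h x) (A.smul_add h x)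

/-- Right multiplication `s ↦ s·x` on the bimodule, as an additive map. -/
def smulrHom (h : p + q = r) (x : B0 q) : B1 p →+ B1 r :=
  AddMonoidHom.mk' (fun s => A.smulr h s x) fun s s' => A.add_smulr h s s' x

/-- The additive map `(e, f) ↦ −e·c + a·f` whose values are the elements of Massey products. -/
def masseyHom (a : B0 p) (c : B0 r) : B1 (p + q) × B1 (q + r) →+ B1 (p + q + r) :=
  (-A.smulrHom rfl c).coprod (A.smulHom (Nat.add_assoc p q r).symm a)

theorem masseyHom_apply (a : B0 p) (c : B0 r) (e : B1 (p + q)) (f : B1 (q + r)) :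
    A.masseyHom a c (e, f) =
      -(A.smulr rfl e c) + A.smul (Nat.add_assoc p q r).symm a f := rfl

/-- The defining systems `(e, f)` of the Massey product for fixed representatives `a`, `b`, `c`,
encoded as the fibre of `∂ × ∂` over `(a·b, b·c)`. -/
def definingSystems (a : B0 p) (b : B0 q) (c : B0 r) : Set (B1 (p + q) × B1 (q + r)) :=
  (A.d (p + q)).prodMap (A.d (q + r)) ⁻¹' {(A.mul rfl a b, A.mul rfl b c)}

theorem mem_definingSystems {a : B0 p} {b : B0 q} {c : B0 r} {e : B1 (p + q)} {f : B1 (q + r)} :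
    (e, f) ∈ A.definingSystems a b c ↔
      A.d (p + q) e = A.mul rfl a b ∧ A.d (q + r) f = A.mul rfl b c :=
  Prod.mk_inj

/-- The part of the Massey product obtained from the fixed representatives `a`, `b`, `c`. -/
def masseyValues (a : B0 p) (b : B0 q) (c : B0 r) : Set (B1 (p + q + r)) :=
  A.masseyHom a c '' A.definingSystems a b c

theorem d_eq_zero_of_mem_masseyValues {a : B0 p} {b : B0 q} {c : B0 r} {z : B1 (p + q + r)}
    (hz : z ∈ A.masseyValues a b c) : A.d (p + q + r) z = 0 := by
  obtain ⟨⟨e, f⟩, hef, rfl⟩ := hz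
  obtain ⟨he, hf⟩ := A.mem_definingSystems.1 hef
  rw [masseyHom_apply, map_add, map_neg, A.d_smulr, A.d_smul, he, hf, A.mul_assoc,
    neg_add_cancel]

section Representatives

variable (a : B0 p) (b : B0 q) (c : B0 r)

theorem masseyValues_subset_add_d_left (u : B1 p) :
    A.masseyValues a b c ⊆ A.masseyValues (a + A.d p u) b c := by
  rintro _ ⟨⟨e, f⟩, hef, rfl⟩
  obtain ⟨he, hf⟩ := A.mem_definingSystems.1 hef
  refine ⟨(e + A.smulr rfl u b, f), A.mem_definingSystems.2 ⟨?_, hf⟩, ?_⟩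
  · rw [map_add, he, A.d_smulr, A.add_mul]
  · rw [masseyHom_apply, masseyHom_apply, A.add_smulr, A.add_smul, A.smul_d, hf,
      A.smulr_mul_assoc]
    abel

theorem masseyValues_subset_add_d_middle (v : B1 q) :
    A.masseyValues a b c ⊆ A.masseyValues a (b + A.d q v) c := by
  rintro _ ⟨⟨e, f⟩, hef, rfl⟩
  obtain ⟨he, hf⟩ := A.mem_definingSystems.1 hef
  refine ⟨(e + A.smul rfl a v, f + A.smulr rfl v c), A.mem_definingSystems.2 ⟨?_, ?_⟩, ?_⟩
  · rw [map_add, he, A.d_smul, A.mul_add]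
  · rw [map_add, hf, A.d_smulr, A.add_mul]
  · rw [masseyHom_apply, masseyHom_apply, A.add_smulr, A.smul_add, A.smul_smulr_assoc]
    abel

theorem masseyValues_subset_add_d_right (w : B1 r) :
    A.masseyValues a b c ⊆ A.masseyValues a b (c + A.d r w) := by
  rintro _ ⟨⟨e, f⟩, hef, rfl⟩
  obtain ⟨he, hf⟩ := A.mem_definingSystems.1 hef
  refine ⟨(e, f + A.smul rfl b w), A.mem_definingSystems.2 ⟨he, ?_⟩, ?_⟩
  · rw [map_add, hf, A.d_smul, A.mul_add]
  · rw [masseyHom_apply, masseyHom_apply, A.smulr_add, A.smul_add, ← A.smul_d, he,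
      A.mul_smul_assoc]
    abel

theorem masseyValues_subset_add_d (u : B1 p) (v : B1 q) (w : B1 r) :
    A.masseyValues a b c ⊆ A.masseyValues (a + A.d p u) (b + A.d q v) (c + A.d r w) :=
  (A.masseyValues_subset_add_d_left a b c u).trans <|
    (A.masseyValues_subset_add_d_middle _ b c v).trans <|
      A.masseyValues_subset_add_d_right _ _ c w

theorem masseyValues_add_d (u : B1 p) (v : B1 q) (w : B1 r) :
    A.masseyValues (a + A.d p u) (b + A.d q v) (c + A.d r w) = A.masseyValues a b c := by
  refine Set.Subset.antisymm ?_ (A.masseyValues_subset_add_d a b c u v w)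
  simpa using A.masseyValues_subset_add_d
    (a + A.d p u) (b + A.d q v) (c + A.d r w) (-u) (-v) (-w)

theorem masseySet_eq_masseyValues : masseySet A p q r a b c = A.masseyValues a b c := by
  ext z
  constructor
  · rintro ⟨u, v, w, e, f, he, hf, rfl⟩
    rw [← A.masseyValues_add_d a b c u v w]
    exact ⟨(e, f), A.mem_definingSystems.2 ⟨he, hf⟩, rfl⟩
  · rintro ⟨⟨e, f⟩, hef, rfl⟩
    obtain ⟨he, hf⟩ := A.mem_definingSystems.1 hef
    exact ⟨0, 0, 0, e, f, by simpa using he, by simpa using hf, by simp [masseyHom_apply]⟩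

theorem definingSystems_add_d_nonempty (hne : (A.definingSystems a b c).Nonempty)
    (u : B1 p) (v : B1 q) (w : B1 r) :
    (A.definingSystems (a + A.d p u) (b + A.d q v) (c + A.d r w)).Nonempty := by
  have hvalues : (A.masseyValues (a + A.d p u) (b + A.d q v) (c + A.d r w)).Nonempty := by
    rw [masseyValues_add_d]
    exact hne.image _
  exact hvalues.of_image

end Representatives

/-- The subgroup `(h₁B_{p+q})·c + a·(h₁B_{q+r})`, encoded as the image of `Ker ∂ × Ker ∂` under
`(e, f) ↦ −e·c + a·f`. -/
def indeterminacy (q : ℕ) (a : B0 p) (c : B0 r) : AddSubgroup (B1 (p + q + r)) :=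
  ((A.d (p + q)).ker.prod (A.d (q + r)).ker).map (A.masseyHom a c)

theorem coe_indeterminacy (a : B0 p) (c : B0 r) :
    (A.indeterminacy q a c : Set (B1 (p + q + r))) = indetSet A p q r a c := by
  have smulr_neg_left (s : B1 (p + q)) : A.smulr rfl (-s) c = -A.smulr rfl s c :=
    map_neg (A.smulrHom rfl c) s
  ext z
  constructor
  · rintro ⟨⟨s, t⟩, ⟨hs, ht⟩, rfl⟩
    exact ⟨-s, t, (A.d (p + q)).ker.neg_mem hs, ht, by rw [masseyHom_apply, smulr_neg_left]⟩
  · rintro ⟨s, t, hs, ht, rfl⟩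
    exact ⟨(-s, t), ⟨(A.d (p + q)).ker.neg_mem hs, ht⟩,
      by rw [masseyHom_apply, smulr_neg_left, neg_neg]⟩

open scoped Pointwise in
theorem masseyValues_eq_vadd_indeterminacy {a : B0 p} {b : B0 q} {c : B0 r}
    {x : B1 (p + q) × B1 (q + r)} (hx : x ∈ A.definingSystems a b c) :
    A.masseyValues a b c =
      A.masseyHom a c x +ᵥ (A.indeterminacy q a c : Set (B1 (p + q + r))) := by
  rw [masseyValues, definingSystems, ← Set.mem_singleton_iff.1 hx, indeterminacy,
    ← AddMonoidHom.ker_prodMap]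
  exact image_preimage_singleton_map_eq_vadd_map_ker _ _ x

end PairAlgebra

/-- For a pair algebra `B` and homogeneous classes `a`, `b`, `c` of degrees
`p`, `q`, `r` (represented by `a0`, `b0`, `c0`) with `a·b = 0` and `b·c = 0`: defining
elements `e`, `f` exist for arbitrary representatives; every resulting element
`−e·c̄ + ā·f` lies in `h₁B_{p+q+r} = Ker ∂`; and the Massey product set is a coset of the
subgroup `(h₁B_{p+q})·c + a·(h₁B_{q+r})`. -/
theorem pairAlgebra_massey_coset (A : PairAlgebra B0 B1) (p q r : ℕ)
    (a0 : B0 p) (b0 : B0 q) (c0 : B0 r)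
    (hab : ∃ e : B1 (p + q), A.d (p + q) e = A.mul rfl a0 b0)
    (hbc : ∃ f : B1 (q + r), A.d (q + r) f = A.mul rfl b0 c0) :
    (∀ (u : B1 p) (v : B1 q) (w : B1 r),
      ∃ (e : B1 (p + q)) (f : B1 (q + r)),
        A.d (p + q) e = A.mul rfl (a0 + A.d p u) (b0 + A.d q v) ∧
        A.d (q + r) f = A.mul rfl (b0 + A.d q v) (c0 + A.d r w)) ∧
    (∀ z ∈ masseySet A p q r a0 b0 c0, A.d (p + q + r) z = 0) ∧
    (∃ S : AddSubgroup (B1 (p + q + r)),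
      (S : Set (B1 (p + q + r))) = indetSet A p q r a0 c0) ∧
    (∃ g ∈ masseySet A p q r a0 b0 c0,
      masseySet A p q r a0 b0 c0 =
        {z | ∃ s ∈ indetSet A p q r a0 c0, z = g + s}) := by
  obtain ⟨e₀, he₀⟩ := hab
  obtain ⟨f₀, hf₀⟩ := hbc
  have hdef : (e₀, f₀) ∈ A.definingSystems a0 b0 c0 := A.mem_definingSystems.2 ⟨he₀, hf₀⟩
  rw [A.masseySet_eq_masseyValues, ← A.coe_indeterminacy]
  refine ⟨fun u v w => ?_, fun z hz => A.d_eq_zero_of_mem_masseyValues hz,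
    ⟨A.indeterminacy q a0 c0, rfl⟩, A.masseyHom a0 c0 (e₀, f₀), ⟨_, hdef, rfl⟩, ?_⟩
  · obtain ⟨⟨e, f⟩, hef⟩ := A.definingSystems_add_d_nonempty a0 b0 c0 ⟨_, hdef⟩ u v w
    exact ⟨e, f, A.mem_definingSystems.1 hef⟩
  · ext z
    simp only [A.masseyValues_eq_vadd_indeterminacy hdef, Set.mem_vadd_set, vadd_eq_add,
      Set.mem_ofPred_eq, eq_comm]
end

section
/- Let C be an E∞-pair algebra, n ≥ 0, and a ∈ h₀C_{2n}. For any representative ā ∈ C_{2n,0} of a one has ∂(ā ⌣₁ ā) = 0, so ā ⌣₁ ā ∈ h₁C_{4n}; moreover this element is independent of the chosen representative: if ā and ā' both represent a, then ā ⌣₁ ā = ā' ⌣₁ ā' in h₁C_{4n}. (This element is the cup-one square Sq₁(a).) -/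
variable {B0 B1 : ℕ → Type*} [∀ n, AddCommGroup (B0 n)] [∀ n, AddCommGroup (B1 n)]

/-- A cup-one product turning the pair algebra `A` into an E∞-pair algebra: an additive
operation `⌣₁ : B_{p,0} ⊗ B_{q,0} → B_{p+q,1}` measuring the commutativity of `A` and
satisfying the four laws of an E∞-pair algebra. -/
structure EInftyCup (A : PairAlgebra B0 B1) where
  cup : ∀ {p q r : ℕ}, p + q = r → B0 p → B0 q → B1 r
  cup_add_left : ∀ {p q r : ℕ} (h : p + q = r) (x x' : B0 p) (y : B0 q),
    cup h (x + x') y = cup h x y + cup h x' y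
  cup_add_right : ∀ {p q r : ℕ} (h : p + q = r) (x : B0 p) (y y' : B0 q),
    cup h x (y + y') = cup h x y + cup h x y'
  cup_comm_mul : ∀ {p q r : ℕ} (h : p + q = r) (x₁ : B0 p) (x₂ : B0 q),
    ((-1 : ℤ) ^ (p * q)) • A.mul ((Nat.add_comm q p).trans h) x₂ x₁ + A.d r (cup h x₁ x₂)
      = A.mul h x₁ x₂
  cup_d : ∀ {p q r : ℕ} (h : p + q = r) (s : B1 p) (x₂ : B0 q),
    ((-1 : ℤ) ^ (p * q)) • A.smul ((Nat.add_comm q p).trans h) x₂ s + cup h (A.d p s) x₂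
      = A.smulr h s x₂
  cup_skew : ∀ {p q r : ℕ} (h : p + q = r) (x₁ : B0 p) (x₂ : B0 q),
    ((-1 : ℤ) ^ (p * q)) • cup ((Nat.add_comm q p).trans h) x₂ x₁ + cup h x₁ x₂ = 0
  cup_mul : ∀ {p q r : ℕ} (x₁ : B0 p) (x₂ : B0 q) (x₃ : B0 r),
    cup rfl (A.mul rfl x₁ x₂) x₃
      = ((-1 : ℤ) ^ (q * r)) •
          A.smulr (by omega : p + r + q = p + q + r) (cup rfl x₁ x₃) x₂
        + A.smul (by omega : p + (q + r) = p + q + r) x₁ (cup rfl x₂ x₃)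

namespace EInftyCup

variable {A : PairAlgebra B0 B1} (C : EInftyCup A) {p q r : ℕ}

theorem d_cup (h : p + q = r) (x : B0 p) (y : B0 q) :
    A.d r (C.cup h x y)
      = A.mul h x y - ((-1 : ℤ) ^ (p * q)) • A.mul ((Nat.add_comm q p).trans h) y x :=
  eq_sub_of_add_eq' (C.cup_comm_mul h x y)

theorem cup_d_d (h : p + q = r) (s : B1 p) (t : B1 q) :
    C.cup h (A.d p s) (A.d q t)
      = A.smul h (A.d p s) t
        - ((-1 : ℤ) ^ (p * q)) • A.smul ((Nat.add_comm q p).trans h) (A.d q t) s := by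
  rw [A.smul_d h]
  exact eq_sub_of_add_eq' (C.cup_d h s (A.d q t))

theorem d_cup_self (hp : Even p) (h : p + p = r) (x : B0 p) : A.d r (C.cup h x x) = 0 := by
  rw [C.d_cup, (hp.mul_right p).neg_one_pow, one_smul, sub_self]

theorem cup_d_d_self (hp : Even p) (h : p + p = r) (s : B1 p) :
    C.cup h (A.d p s) (A.d p s) = 0 := by
  rw [C.cup_d_d, (hp.mul_right p).neg_one_pow, one_smul, sub_self]

theorem cup_anticomm_of_even (hpq : Even (p * q)) (h : p + q = r) (x : B0 p) (y : B0 q) :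
    C.cup ((Nat.add_comm q p).trans h) y x = -C.cup h x y := by
  have hskew := C.cup_skew h x y
  rw [hpq.neg_one_pow, one_smul] at hskew
  exact eq_neg_of_add_eq_zero_left hskew

theorem cup_add_self (hp : Even p) (h : p + p = r) (x y : B0 p) :
    C.cup h (x + y) (x + y) = C.cup h x x + C.cup h y y := by
  rw [C.cup_add_left, C.cup_add_right, C.cup_add_right,
    C.cup_anticomm_of_even (hp.mul_right p) h x y]
  abel

theorem cup_add_d_self (hp : Even p) (h : p + p = r) (x : B0 p) (s : B1 p) :
    C.cup h (x + A.d p s) (x + A.d p s) = C.cup h x x := by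
  rw [C.cup_add_self hp, C.cup_d_d_self hp, add_zero]

end EInftyCup

/-- In an E∞-pair algebra `C`, for `a ∈ h₀C_{2n}` represented by
`ā ∈ C_{2n,0}` one has `∂(ā ⌣₁ ā) = 0`, so `ā ⌣₁ ā ∈ h₁C_{4n}`, and this element does not
depend on the chosen representative of `a`: this is the cup-one square `Sq₁(a)`. -/
theorem eInftyPairAlgebra_cup_one_square (A : PairAlgebra B0 B1) (cupd : EInftyCup A)
    (n : ℕ) :
    (∀ ab : B0 (2 * n), A.d (2 * n + 2 * n) (cupd.cup rfl ab ab) = 0) ∧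
    (∀ (ab : B0 (2 * n)) (c : B1 (2 * n)),
      cupd.cup rfl (ab + A.d (2 * n) c) (ab + A.d (2 * n) c) = cupd.cup rfl ab ab) :=
  ⟨cupd.d_cup_self (even_two_mul n) rfl, cupd.cup_add_d_self (even_two_mul n) rfl⟩
end

section
/- Let B be a quadratic pair algebra and α ∈ h₀B_n with 2α = 0. Then the Massey product ⟨2, α, 2⟩ ⊆ h₁B_n is defined (where 2 ∈ h₀B₀ is the class of 1+1, so 2·α = 0 = α·2), and the k-invariant of the quadratic pair module B_{n,*} satisfies k(α) = P((a|a)_H) ∈ ⟨2, α, 2⟩ for any representative a ∈ B_{n,0} of α. -/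
/-- A quadratic pair algebra: an ℕ-graded quadratic pair module `{B_{n,*}}` together with
multiplications on levels 0, 1 and ee (indexed by a proof `p + q = r` recording degrees),
a unit `1 ∈ B_{0,0}` with `H(1) = 0` (whose cross-square `(1|1)_H` is a unit for the
ee-multiplication), satisfying associativity, right linearity, left distributivity with
quadratic correction terms, and the compatibility laws with `∂`, `P` and `H`. -/
structure QuadraticPairAlgebra (B0 B1 Bee : ℕ → Type*)
    [∀ n, AddGroup (B0 n)] [∀ n, AddGroup (B1 n)] [∀ n, AddCommGroup (Bee n)] where
  d : ∀ n, B1 n →+ B0 n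
  P : ∀ n, Bee n →+ B1 n
  H : ∀ n, B0 n → Bee n
  sq0 : ∀ n, IsSquareGroup ((d n).comp (P n)) (H n)
  sq1 : ∀ n, IsSquareGroup (P n) (H n ∘ d n)
  mul : ∀ {p q r : ℕ}, p + q = r → B0 p → B0 q → B0 r
  smul : ∀ {p q r : ℕ}, p + q = r → B0 p → B1 q → B1 r
  smulr : ∀ {p q r : ℕ}, p + q = r → B1 p → B0 q → B1 r
  mulee : ∀ {p q r : ℕ}, p + q = r → Bee p → Bee q → Bee r
  one : B0 0
  H_one : H 0 one = 0
  one_mul : ∀ {q : ℕ} (x : B0 q), mul (Nat.zero_add q) one x = x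
  mul_one : ∀ {p : ℕ} (x : B0 p), mul rfl x one = x
  one_smul : ∀ {q : ℕ} (s : B1 q), smul (Nat.zero_add q) one s = s
  smulr_one : ∀ {p : ℕ} (s : B1 p), smulr rfl s one = s
  crossone_mulee : ∀ {q : ℕ} (a : Bee q),
    mulee (Nat.zero_add q) (crossEff (H 0) one one) a = a
  mulee_crossone : ∀ {p : ℕ} (a : Bee p),
    mulee rfl a (crossEff (H 0) one one) = a
  mul_assoc : ∀ {p q r : ℕ} (x : B0 p) (y : B0 q) (z : B0 r),
    mul rfl (mul rfl x y) z = mul (Nat.add_assoc p q r).symm x (mul rfl y z)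
  mul_smul_assoc : ∀ {p q r : ℕ} (x : B0 p) (y : B0 q) (s : B1 r),
    smul rfl (mul rfl x y) s = smul (Nat.add_assoc p q r).symm x (smul rfl y s)
  smul_smulr_assoc : ∀ {p q r : ℕ} (x : B0 p) (s : B1 q) (y : B0 r),
    smulr rfl (smul rfl x s) y = smul (Nat.add_assoc p q r).symm x (smulr rfl s y)
  smulr_mul_assoc : ∀ {p q r : ℕ} (s : B1 p) (y : B0 q) (z : B0 r),
    smulr rfl (smulr rfl s y) z = smulr (Nat.add_assoc p q r).symm s (mul rfl y z)
  mulee_assoc : ∀ {p q r : ℕ} (a : Bee p) (b : Bee q) (c : Bee r),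
    mulee rfl (mulee rfl a b) c = mulee (Nat.add_assoc p q r).symm a (mulee rfl b c)
  -- right linearity
  mul_add : ∀ {p q r : ℕ} (h : p + q = r) (x : B0 p) (y y' : B0 q),
    mul h x (y + y') = mul h x y + mul h x y'
  smul_add : ∀ {p q r : ℕ} (h : p + q = r) (x : B0 p) (s s' : B1 q),
    smul h x (s + s') = smul h x s + smul h x s'
  smulr_add : ∀ {p q r : ℕ} (h : p + q = r) (s : B1 p) (x x' : B0 q),
    smulr h s (x + x') = smulr h s x + smulr h s x'
  mulee_add : ∀ {p q r : ℕ} (h : p + q = r) (a : Bee p) (b b' : Bee q),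
    mulee h a (b + b') = mulee h a b + mulee h a b'
  -- left distributivity with quadratic corrections
  add_mul : ∀ {p q r : ℕ} (h : p + q = r) (x₁ x₂ : B0 p) (x₃ : B0 q),
    mul h (x₁ + x₂) x₃ = mul h x₁ x₃ + mul h x₂ x₃
      + d r (P r (mulee h (crossEff (H p) x₂ x₁) (H q x₃)))
  add_smul : ∀ {p q r : ℕ} (h : p + q = r) (x₁ x₂ : B0 p) (s : B1 q),
    smul h (x₁ + x₂) s = smul h x₁ s + smul h x₂ s
      + P r (mulee h (crossEff (H p) x₂ x₁) (H q (d q s)))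
  add_smulr : ∀ {p q r : ℕ} (h : p + q = r) (s₁ s₂ : B1 p) (x : B0 q),
    smulr h (s₁ + s₂) x = smulr h s₁ x + smulr h s₂ x
      + P r (mulee h (crossEff (H p) (d p s₂) (d p s₁)) (H q x))
  add_mulee : ∀ {p q r : ℕ} (h : p + q = r) (a₁ a₂ : Bee p) (a₃ : Bee q),
    mulee h (a₁ + a₂) a₃ = mulee h a₁ a₃ + mulee h a₂ a₃
  -- compatibility of ∂ with the multiplications
  d_smul : ∀ {p q r : ℕ} (h : p + q = r) (x : B0 p) (s : B1 q),
    d r (smul h x s) = mul h x (d q s)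
  d_smulr : ∀ {p q r : ℕ} (h : p + q = r) (s : B1 p) (x : B0 q),
    d r (smulr h s x) = mul h (d p s) x
  smul_d : ∀ {p q r : ℕ} (h : p + q = r) (s : B1 p) (t : B1 q),
    smul h (d p s) t = smulr h s (d q t)
  -- compatibility with P, H, Δ and the cross effect
  P_cross_mulee : ∀ {p q r : ℕ} (h : p + q = r) (x : B0 p) (a : Bee q),
    P r (mulee h (crossEff (H p) x x) a) = smul h x (P q a)
  P_mulee_delta : ∀ {p q r : ℕ} (h : p + q = r) (a : Bee p) (x : B0 q),
    P r (mulee h a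
      (crossEff (H q) x x - H q x + (H q (d q (P q (H q x))) - H q x)))
      = smulr h (P p a) x
  H_mul : ∀ {p q r : ℕ} (h : p + q = r) (x₁ : B0 p) (x₂ : B0 q),
    H r (mul h x₁ x₂) = mulee h (crossEff (H p) x₁ x₁) (H q x₂)
      + mulee h (H p x₁)
          (crossEff (H q) x₂ x₂ - H q x₂ + (H q (d q (P q (H q x₂))) - H q x₂))
  HdP_mulee : ∀ {p q r : ℕ} (h : p + q = r) (a₁ : Bee p) (a₂ : Bee q),
    H r (d r (P r (mulee h a₁ a₂)))
      = mulee h (H p (d p (P p a₁))) a₂ + mulee h a₁ (H q (d q (P q a₂)))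
        - mulee h (H p (d p (P p a₁))) (H q (d q (P q a₂)))
  cross_mul : ∀ {p q r : ℕ} (h : p + q = r) (x₁ x₃ : B0 p) (x₂ x₄ : B0 q),
    crossEff (H r) (mul h x₁ x₂) (mul h x₃ x₄)
      = mulee h (crossEff (H p) x₁ x₃) (crossEff (H q) x₂ x₄)

variable {B0 B1 Bee : ℕ → Type*}
  [∀ n, AddGroup (B0 n)] [∀ n, AddGroup (B1 n)] [∀ n, AddCommGroup (Bee n)]

/-- The Massey product set `⟨2, α, 2⟩ ⊆ B1 n`, where `2 ∈ h₀B₀` is the class of `1+1` and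
`α ∈ h₀B_n` is the class of `a` (with `2α = 0`): all elements `−e·c̄ + ā·f` where
`ā = 1+1+∂u`, `b̄ = a+∂v`, `c̄ = 1+1+∂w` range over representatives and
`∂e = ā·b̄`, `∂f = b̄·c̄`. -/
def massey2a2 (A : QuadraticPairAlgebra B0 B1 Bee) (n : ℕ) (a : B0 n) : Set (B1 n) :=
  {z | ∃ (u w : B1 0) (v : B1 n) (e f : B1 n),
    A.d n e = A.mul (Nat.zero_add n) (A.one + A.one + A.d 0 u) (a + A.d n v) ∧
    A.d n f = A.mul (Nat.add_zero n) (a + A.d n v) (A.one + A.one + A.d 0 w) ∧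
    z = -(A.smulr (Nat.add_zero n) e (A.one + A.one + A.d 0 w)) +
        A.smul (Nat.zero_add n) (A.one + A.one + A.d 0 u) f}

lemma map_add_eq_add_crossEff {X Xee : Type*} [AddGroup X] [AddCommGroup Xee]
    (H : X → Xee) (x y : X) : H (x + y) = H x + H y + crossEff H x y := by
  unfold crossEff
  abel

lemma IsSquareGroup.addCommute_P {X Xee : Type*} [AddGroup X] [AddCommGroup Xee]
    {P : Xee →+ X} {H : X → Xee} (hPH : IsSquareGroup P H) (x : Xee) (s : X) :
    AddCommute (P x) s := by
  have h : -P x - s + P x + s = 0 := by rw [← hPH.P_cross, hPH.cross_P_left, map_zero]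
  rw [sub_eq_add_neg, ← neg_add_rev, add_assoc, neg_add_eq_zero] at h
  exact h.symm

namespace QuadraticPairAlgebra

variable (A : QuadraticPairAlgebra B0 B1 Bee)

lemma mul_assoc_of_eq {p q r pq qr s : ℕ} (hpq : p + q = pq) (hpq_r : pq + r = s)
    (hqr : q + r = qr) (hp_qr : p + qr = s) (x : B0 p) (y : B0 q) (z : B0 r) :
    A.mul hpq_r (A.mul hpq x y) z = A.mul hp_qr x (A.mul hqr y z) := by
  subst hpq hqr hpq_r
  exact A.mul_assoc x y z

lemma mul_add_d_mem_range {p q r : ℕ} (h : p + q = r) {x : B0 p} {y : B0 q}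
    (hxy : A.mul h x y ∈ (A.d r).range) (u : B1 p) (v : B1 q) :
    A.mul h (x + A.d p u) (y + A.d q v) ∈ (A.d r).range := by
  rw [A.mul_add, A.add_mul, ← A.d_smulr, ← A.d_smul]
  exact add_mem (add_mem (add_mem hxy ⟨_, rfl⟩) ⟨_, rfl⟩) ⟨_, rfl⟩

/-- The Massey product `⟨α, β, γ⟩` of the classes of `a`, `b`, `c`: all elements
`-e·c̄ + ā·f` with `∂e = ā·b̄` and `∂f = b̄·c̄`, where `ā = a + ∂u`, `b̄ = b + ∂v` and
`c̄ = c + ∂w` range over the representatives. The degrees `p + q`, `q + r` and `p + q + r` are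
variables constrained by equations, so that no transport along these equations occurs. -/
def masseyProduct {p q r pq qr s : ℕ} (hpq : p + q = pq) (hqr : q + r = qr)
    (hpq_r : pq + r = s) (hp_qr : p + qr = s) (a : B0 p) (b : B0 q) (c : B0 r) : Set (B1 s) :=
  {z | ∃ (u : B1 p) (w : B1 r) (v : B1 q) (e : B1 pq) (f : B1 qr),
    A.d pq e = A.mul hpq (a + A.d p u) (b + A.d q v) ∧
    A.d qr f = A.mul hqr (b + A.d q v) (c + A.d r w) ∧
    z = -(A.smulr hpq_r e (c + A.d r w)) + A.smul hp_qr (a + A.d p u) f}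

section MasseyProduct

variable {p q r pq qr s : ℕ} (hpq : p + q = pq) (hqr : q + r = qr) (hpq_r : pq + r = s)
  (hp_qr : p + qr = s) (a : B0 p) (b : B0 q) (c : B0 r)

lemma d_eq_zero_of_mem_masseyProduct {z : B1 s}
    (hz : z ∈ A.masseyProduct hpq hqr hpq_r hp_qr a b c) : A.d s z = 0 := by
  obtain ⟨u, w, v, e, f, he, hf, rfl⟩ := hz
  rw [map_add, map_neg, A.d_smulr, A.d_smul, he, hf, A.mul_assoc_of_eq hpq hpq_r hqr hp_qr,
    neg_add_cancel]

lemma masseyProduct_add_d_middle (v : B1 q) :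
    A.masseyProduct hpq hqr hpq_r hp_qr a (b + A.d q v) c =
      A.masseyProduct hpq hqr hpq_r hp_qr a b c := by
  ext z
  simp only [masseyProduct, Set.mem_ofPred_eq, add_assoc b, ← map_add]
  exact exists₂_congr fun _ _ => (Equiv.addLeft v).exists_congr fun _ => Iff.rfl

variable {a b c}

lemma neg_smulr_add_smul_mem_masseyProduct {e : B1 pq} {f : B1 qr}
    (he : A.d pq e = A.mul hpq a b) (hf : A.d qr f = A.mul hqr b c) :
    -(A.smulr hpq_r e c) + A.smul hp_qr a f ∈ A.masseyProduct hpq hqr hpq_r hp_qr a b c :=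
  ⟨0, 0, 0, e, f, by simpa only [map_zero, add_zero] using he,
    by simpa only [map_zero, add_zero] using hf, by simp only [map_zero, add_zero]⟩

end MasseyProduct

variable {n : ℕ}

lemma massey2a2_eq_masseyProduct (a : B0 n) :
    massey2a2 A n a = A.masseyProduct (Nat.zero_add n) (Nat.add_zero n) (Nat.add_zero n)
      (Nat.zero_add n) (A.one + A.one) a (A.one + A.one) :=
  rfl

lemma mul_one_add_one (x : B0 n) : A.mul (Nat.add_zero n) x (A.one + A.one) = x + x :=
  (A.mul_add _ x _ _).trans (congrArg₂ (· + ·) (A.mul_one x) (A.mul_one x))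

lemma smulr_one_add_one (s : B1 n) : A.smulr (Nat.add_zero n) s (A.one + A.one) = s + s :=
  (A.smulr_add _ s _ _).trans (congrArg₂ (· + ·) (A.smulr_one s) (A.smulr_one s))

lemma one_add_one_mul (x : B0 n) :
    A.mul (Nat.zero_add n) (A.one + A.one) x = x + x + A.d n (A.P n (A.H n x)) := by
  rw [A.add_mul, A.one_mul, A.crossone_mulee]

lemma one_add_one_smul (s : B1 n) :
    A.smul (Nat.zero_add n) (A.one + A.one) s = s + s + A.P n (A.H n (A.d n s)) := by
  rw [A.add_smul, A.one_smul, A.crossone_mulee]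

lemma neg_smulr_add_smul_eq_P_crossEff {b : B0 n} {f : B1 n} (hf : A.d n f = b + b) :
    -(A.smulr (Nat.add_zero n) (f + A.P n (A.H n b)) (A.one + A.one)) +
      A.smul (Nat.zero_add n) (A.one + A.one) f = A.P n (crossEff (A.H n) b b) := by
  have h_smulr : A.smulr (Nat.add_zero n) (f + A.P n (A.H n b)) (A.one + A.one) =
      f + f + A.P n (A.H n b + A.H n b) := by
    rw [A.smulr_one_add_one, ((A.sq1 n).addCommute_P _ f).add_add_add_comm, map_add]
  have h_smul : A.smul (Nat.zero_add n) (A.one + A.one) f =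
      f + f + A.P n (A.H n b + A.H n b) + A.P n (crossEff (A.H n) b b) := by
    rw [A.one_add_one_smul, hf, map_add_eq_add_crossEff (A.H n), map_add (A.P n), add_assoc (f + f)]
  rw [h_smulr, h_smul, neg_add_cancel_left]

lemma P_crossEff_self_mem_massey2a2 {b : B0 n} (hb : b + b ∈ (A.d n).range) :
    A.P n (crossEff (A.H n) b b) ∈ massey2a2 A n b := by
  obtain ⟨f, hf⟩ := hb
  rw [← A.neg_smulr_add_smul_eq_P_crossEff hf, massey2a2_eq_masseyProduct]
  apply neg_smulr_add_smul_mem_masseyProduct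
  · rw [A.one_add_one_mul, map_add, hf]
  · rw [A.mul_one_add_one, hf]

end QuadraticPairAlgebra

/-- Let `B` be a quadratic pair algebra and `α ∈ h₀B_n` (represented by `a`)
with `2α = 0`.  Then the Massey product `⟨2, α, 2⟩ ⊆ h₁B_n` is defined (the requisite
elements `e`, `f` exist for all representatives, and all its members lie in
`h₁B_n = Ker ∂`), and the k-invariant satisfies `k(α) = P((ā|ā)_H) ∈ ⟨2, α, 2⟩` for every
representative `ā` of `α`. -/
theorem quadraticPairAlgebra_massey_two_alpha_two (A : QuadraticPairAlgebra B0 B1 Bee)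
    (n : ℕ) (a : B0 n) (h2a : ∃ c : B1 n, a + a = A.d n c) :
    (∀ (u w : B1 0) (v : B1 n),
      ∃ e f : B1 n,
        A.d n e = A.mul (Nat.zero_add n) (A.one + A.one + A.d 0 u) (a + A.d n v) ∧
        A.d n f = A.mul (Nat.add_zero n) (a + A.d n v) (A.one + A.one + A.d 0 w)) ∧
    (∀ z ∈ massey2a2 A n a, A.d n z = 0) ∧
    (∀ v : B1 n,
      A.P n (crossEff (A.H n) (a + A.d n v) (a + A.d n v)) ∈ massey2a2 A n a) := by
  have h_mul_two : A.mul (Nat.add_zero n) a (A.one + A.one) ∈ (A.d n).range := by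
    obtain ⟨c, hc⟩ := h2a
    exact ⟨c, by rw [A.mul_one_add_one, hc]⟩
  have h_two_mul : A.mul (Nat.zero_add n) (A.one + A.one) a ∈ (A.d n).range := by
    rw [A.one_add_one_mul, ← A.mul_one_add_one]
    exact add_mem h_mul_two ⟨_, rfl⟩
  refine ⟨fun u w v => ?_, fun z hz => ?_, fun v => ?_⟩
  · obtain ⟨e, he⟩ := A.mul_add_d_mem_range _ h_two_mul u v
    obtain ⟨f, hf⟩ := A.mul_add_d_mem_range _ h_mul_two v w
    exact ⟨e, f, he, hf⟩
  · exact A.d_eq_zero_of_mem_masseyProduct _ _ _ _ _ _ _ hz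
  · have h_add_self : (a + A.d n v) + (a + A.d n v) ∈ (A.d n).range := by
      simpa only [map_zero, add_zero, A.mul_one_add_one] using
        A.mul_add_d_mem_range _ h_mul_two v 0
    rw [A.massey2a2_eq_masseyProduct, ← A.masseyProduct_add_d_middle _ _ _ _ _ _ _ v]
    exact A.P_crossEff_self_mem_massey2a2 h_add_self
end

section
/- Let C be an E∞-quadratic pair algebra. Then h₀C is a commutative ℕ-graded ring: for x₁ ∈ C_{n₁,0} and x₂ ∈ C_{n₂,0} the classes in h₀C satisfy [x₁·x₂] = (−1)^{n₁·n₂}[x₂·x₁]. Moreover, for s₁ ∈ C_{n₁,1} with ∂(s₁) = 0 and x₂ ∈ C_{n₂,0}, one has s₁·x₂ = (−1)^{n₁·n₂} x₂·s₁ in C_{n₁+n₂,1}; in particular the h₀C-bimodule h₁C is symmetric. -/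
/-- The block transposition `τ_{p,q} ∈ Σ_{p+q}` interchanging the first `p` and the
last `q` elements. -/
def blockPerm (p q : ℕ) : Equiv.Perm (Fin (p + q)) :=
  (finAddFlip.trans (finCongr (Nat.add_comm q p)) : Fin (p + q) ≃ Fin (p + q))

/-- `binom(ε,2)`: equal to `0` for `ε = 1` and to `1` for `ε = −1`. -/
def signBinom (u : ℤˣ) : ℤ := if u = 1 then 0 else 1

variable {B0 B1 Bee : ℕ → Type*}
  [∀ n, AddGroup (B0 n)] [∀ n, AddGroup (B1 n)] [∀ n, AddCommGroup (Bee n)]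

/-- An E∞-quadratic pair algebra: a quadratic pair algebra `C` such that each `C_{n,*}`
carries a right action of a symmetric track sign group
`{±1} → Σ̃ₙ →δ→ Σₙ →sign→ {±1}` (a sign group over the symmetric group `Σₙ` with
`ε = sign`), together with cup-one products `⌣₁ : C_{n,0} × C_{m,0} → C_{n+m,1}`
measuring the lack of commutativity via the block transpositions `τ_{p,q}`. -/
structure EInftyQuadraticPairAlgebra
    (Gt : ℕ → Type*) [∀ n, Group (Gt n)]
    (δ : ∀ n, Gt n →* Equiv.Perm (Fin n)) (ω : ∀ n, Gt n)
    extends QuadraticPairAlgebra B0 B1 Bee where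
  -- sign group structure of the symmetric track groups
  δ_surj : ∀ n, Function.Surjective (δ n)
  ω_ne_one : ∀ n, ω n ≠ 1
  ker_δ : ∀ (n : ℕ) (t : Gt n), δ n t = 1 ↔ t = 1 ∨ t = ω n
  -- right action of Σₙ by quadratic pair module morphisms
  act0 : ∀ n, B0 n → Equiv.Perm (Fin n) → B0 n
  act1 : ∀ n, B1 n → Equiv.Perm (Fin n) → B1 n
  actee : ∀ n, Bee n → Equiv.Perm (Fin n) → Bee n
  act0_add : ∀ (n) (g : Equiv.Perm (Fin n)) (x y : B0 n),
    act0 n (x + y) g = act0 n x g + act0 n y g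
  act1_add : ∀ (n) (g : Equiv.Perm (Fin n)) (x y : B1 n),
    act1 n (x + y) g = act1 n x g + act1 n y g
  actee_add : ∀ (n) (g : Equiv.Perm (Fin n)) (x y : Bee n),
    actee n (x + y) g = actee n x g + actee n y g
  act0_one : ∀ (n) (x : B0 n), act0 n x 1 = x
  act1_one : ∀ (n) (x : B1 n), act1 n x 1 = x
  actee_one : ∀ (n) (x : Bee n), actee n x 1 = x
  act0_mul : ∀ (n) (x : B0 n) (g g' : Equiv.Perm (Fin n)),
    act0 n x (g * g') = act0 n (act0 n x g) g'
  act1_mul : ∀ (n) (x : B1 n) (g g' : Equiv.Perm (Fin n)),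
    act1 n x (g * g') = act1 n (act1 n x g) g'
  actee_mul : ∀ (n) (x : Bee n) (g g' : Equiv.Perm (Fin n)),
    actee n x (g * g') = actee n (actee n x g) g'
  act_d : ∀ (n) (s : B1 n) (g : Equiv.Perm (Fin n)), d n (act1 n s g) = act0 n (d n s) g
  act_P : ∀ (n) (a : Bee n) (g : Equiv.Perm (Fin n)), act1 n (P n a) g = P n (actee n a g)
  act_H : ∀ (n) (x : B0 n) (g : Equiv.Perm (Fin n)), actee n (H n x) g = H n (act0 n x g)
  -- the bracket `⟨−,−⟩ : C_{n,0} × Σ̃ₙ → C_{n,1}` of the sign group action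
  br : ∀ n, B0 n → Gt n → B1 n
  br_add : ∀ (n) (x y : B0 n) (t : Gt n),
    br n (x + y) t = br n x t + br n y t
      + P n (crossEff (H n)
          (-(act0 n x (δ n t)) + ((Equiv.Perm.sign (δ n t) : ℤˣ) : ℤ) • x)
          (act0 n y (δ n t)))
  br_d : ∀ (n) (x : B0 n) (t : Gt n),
    ((Equiv.Perm.sign (δ n t) : ℤˣ) : ℤ) • x
        + signBinom (Equiv.Perm.sign (δ n t)) • d n (P n (H n x))
      = act0 n x (δ n t) + d n (br n x t)
  br_d1 : ∀ (n) (z : B1 n) (t : Gt n),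
    ((Equiv.Perm.sign (δ n t) : ℤˣ) : ℤ) • z
        + signBinom (Equiv.Perm.sign (δ n t)) • P n (H n (d n z))
      = act1 n z (δ n t) + br n (d n z) t
  br_mul : ∀ (n) (x : B0 n) (s t : Gt n),
    br n x (s * t) = br n (act0 n x (δ n s)) t
      + br n (((Equiv.Perm.sign (δ n t) : ℤˣ) : ℤ) • x
          + signBinom (Equiv.Perm.sign (δ n t)) • d n (P n (H n x))) s
  br_omega : ∀ (n) (x : B0 n), br n x (ω n) = P n (crossEff (H n) x x)
  -- compatibility of the product with the sign group actions (cross products of blocks)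
  act_mul : ∀ {p q r : ℕ} (h : p + q = r) (x₁ : B0 p) (x₂ : B0 q)
      (g₁ : Equiv.Perm (Fin p)) (g₂ : Equiv.Perm (Fin q)),
    mul h (act0 p x₁ g₁) (act0 q x₂ g₂)
      = act0 r (mul h x₁ x₂)
          ((finCongr h).permCongr (finSumFinEquiv.permCongr (g₁.sumCongr g₂)))
  -- the cup-one product and its two defining laws
  cup : ∀ {p q r : ℕ}, p + q = r → B0 p → B0 q → B1 r
  cup_comm0 : ∀ {p q r : ℕ} (h : p + q = r) (x₁ : B0 p) (x₂ : B0 q),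
    act0 r (mul ((Nat.add_comm q p).trans h) x₂ x₁) ((finCongr h).permCongr (blockPerm p q))
        + d r (cup h x₁ x₂)
      = mul h x₁ x₂
        + act0 r (d r (P r (mulee ((Nat.add_comm q p).trans h) (H q x₂)
            (H p (d p (P p (H p x₁))) - H p x₁))))
            ((finCongr h).permCongr (blockPerm p q))
  cup_comm1 : ∀ {p q r : ℕ} (h : p + q = r) (s₁ : B1 p) (x₂ : B0 q),
    act1 r (smul ((Nat.add_comm q p).trans h) x₂ s₁) ((finCongr h).permCongr (blockPerm p q))
        + cup h (d p s₁) x₂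
      = smulr h s₁ x₂
        + act1 r (P r (mulee ((Nat.add_comm q p).trans h) (H q x₂)
            (H p (d p (P p (H p (d p s₁)))) - H p (d p s₁))))
            ((finCongr h).permCongr (blockPerm p q))

lemma coe_finRotate_pow (n k : ℕ) (i : Fin n) : ((finRotate n ^ k) i : ℕ) = (i + k) % n := by
  have := i.neZero
  induction k with
  | zero => simp [Nat.mod_eq_of_lt i.isLt]
  | succ k ih =>
    rw [pow_succ', Equiv.Perm.mul_apply, finRotate_apply, Fin.val_add, ih, Fin.val_one',
      ← Nat.add_mod, Nat.add_assoc]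

lemma blockPerm_eq_finRotate_pow (p q : ℕ) : blockPerm p q = finRotate (p + q) ^ q := by
  ext i
  rw [coe_finRotate_pow]
  refine Fin.addCases (fun j => ?_) (fun j => ?_) i
  · have hlt : (j : ℕ) + q < p + q := by omega
    simp [blockPerm, Nat.mod_eq_of_lt hlt]
  · have hwrap : p + (j : ℕ) + q = j + (p + q) := by omega
    have hlt : (j : ℕ) < p + q := by omega
    simp [blockPerm, hwrap, Nat.mod_eq_of_lt hlt]

lemma sign_blockPerm (p q : ℕ) : Equiv.Perm.sign (blockPerm p q) = (-1) ^ (p * q) := by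
  have hexp : (p + q - 1) * q = p * q + q * (q - 1) := by
    cases q with
    | zero => rfl
    | succ q => rw [← Nat.add_assoc, Nat.add_sub_cancel, Nat.add_sub_cancel]; ring
  rw [blockPerm_eq_finRotate_pow, map_pow, sign_finRotate, ← pow_mul, hexp, pow_add,
    (Nat.even_mul_pred_self q).neg_one_pow, mul_one]

lemma coe_sign_permCongr_blockPerm {p q r : ℕ} (h : p + q = r) :
    ((Equiv.Perm.sign ((finCongr h).permCongr (blockPerm p q)) : ℤˣ) : ℤ) = (-1) ^ (p * q) := by
  simp [Equiv.Perm.sign_permCongr, sign_blockPerm]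

namespace IsSquareGroup

variable {Xe Xee : Type*} [AddGroup Xe] [AddCommGroup Xee] {P : Xee →+ Xe} {H : Xe → Xee}

lemma cross_zero_left (h : IsSquareGroup P H) (a : Xe) : crossEff H 0 a = 0 := by
  simpa using h.cross_add_left 0 0 a

lemma map_zero (h : IsSquareGroup P H) : H 0 = 0 := by
  simpa [crossEff] using h.cross_zero_left 0

end IsSquareGroup

namespace QuadraticPairAlgebra

variable (A : QuadraticPairAlgebra B0 B1 Bee) {p q r : ℕ} (h : p + q = r)

lemma H_zero (n : ℕ) : A.H n 0 = 0 := (A.sq0 n).map_zero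

lemma mulee_zero (a : Bee p) : A.mulee h a 0 = 0 := by
  simpa using A.mulee_add h a 0 0

lemma zero_mulee (a : Bee q) : A.mulee h 0 a = 0 := by
  simpa using A.add_mulee h 0 0 a

lemma mul_zero (x : B0 p) : A.mul h x 0 = 0 := by
  simpa using A.mul_add h x 0 0

lemma smul_zero (x : B0 p) : A.smul h x 0 = 0 := by
  simpa using A.smul_add h x 0 0

lemma zero_smulr (x : B0 q) : A.smulr h 0 x = 0 := by
  simpa [(A.sq0 p).cross_zero_left, A.zero_mulee] using A.add_smulr h 0 0 x

-- Commutators in `C₀` are boundaries, by the law `P((a|b)_H) = -a - b + a + b`.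
instance normal_range_d (n : ℕ) : (A.d n).range.Normal where
  conj_mem := by
    rintro _ ⟨z, rfl⟩ g
    refine ⟨z + A.P n (crossEff (A.H n) (A.d n z) (-g)), ?_⟩
    have hcomm := (A.sq0 n).P_cross (A.d n z) (-g)
    rw [AddMonoidHom.comp_apply] at hcomm
    rw [map_add, hcomm]
    simp [add_assoc]

/-- The degree `n` part of `h₀C = C₀/∂(C₁)`. -/
abbrev h0 (n : ℕ) : Type _ := B0 n ⧸ (A.d n).range

/-- The class map `x ↦ [x]` from `C_{n,0}` to `h₀C`. -/
def toH0 (n : ℕ) : B0 n →+ A.h0 n := QuotientAddGroup.mk' _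

lemma toH0_d (n : ℕ) (s : B1 n) : A.toH0 n (A.d n s) = 0 :=
  (QuotientAddGroup.eq_zero_iff _).2 ⟨s, rfl⟩

lemma toH0_eq_iff_exists_d {n : ℕ} {x y : B0 n} :
    A.toH0 n x = A.toH0 n y ↔ ∃ s, x = y + A.d n s := by
  rw [eq_comm]
  exact QuotientAddGroup.eq.trans <| exists_congr fun s => by
    rw [eq_neg_add_iff_add_eq, eq_comm]

end QuadraticPairAlgebra

namespace EInftyQuadraticPairAlgebra

variable {Gt : ℕ → Type*} [∀ n, Group (Gt n)]
  {δ : ∀ n, Gt n →* Equiv.Perm (Fin n)} {ω : ∀ n, Gt n}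
  (A : EInftyQuadraticPairAlgebra (B0 := B0) (B1 := B1) (Bee := Bee) Gt δ ω)
  {p q r : ℕ} (h : p + q = r)

lemma act1_zero (n : ℕ) (g : Equiv.Perm (Fin n)) : A.act1 n 0 g = 0 := by
  simpa using A.act1_add n g 0 0

lemma br_zero (n : ℕ) (t : Gt n) : A.br n 0 t = 0 := by
  simpa [A.act1_zero, A.H_zero] using (A.br_d1 n 0 t).symm

lemma toH0_act0 (n : ℕ) (x : B0 n) (g : Equiv.Perm (Fin n)) :
    A.toH0 n (A.act0 n x g) = ((Equiv.Perm.sign g : ℤˣ) : ℤ) • A.toH0 n x := by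
  obtain ⟨t, rfl⟩ := A.δ_surj n g
  simpa only [map_add, map_zsmul, A.toH0_d, smul_zero, add_zero] using
    (congrArg (A.toH0 n) (A.br_d n x t)).symm

lemma act1_of_d_eq_zero {n : ℕ} {z : B1 n} (hz : A.d n z = 0) (g : Equiv.Perm (Fin n)) :
    A.act1 n z g = ((Equiv.Perm.sign g : ℤˣ) : ℤ) • z := by
  obtain ⟨t, rfl⟩ := A.δ_surj n g
  simpa [hz, A.br_zero, A.H_zero] using (A.br_d1 n z t).symm

theorem toH0_mul_comm (x₁ : B0 p) (x₂ : B0 q) :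
    A.toH0 r (A.mul h x₁ x₂) =
      ((-1 : ℤ) ^ (p * q)) • A.toH0 r (A.mul ((Nat.add_comm q p).trans h) x₂ x₁) := by
  have hcup := congrArg (A.toH0 r) (A.cup_comm0 h x₁ x₂)
  simp only [map_add, ← A.act_d, A.toH0_d, add_zero] at hcup
  rw [← hcup, A.toH0_act0, coe_sign_permCongr_blockPerm]

lemma act1_smul_add_cup_of_d_eq_zero {s₁ : B1 p} (hs : A.d p s₁ = 0) (x₂ : B0 q) :
    A.act1 r (A.smul ((Nat.add_comm q p).trans h) x₂ s₁)
        ((finCongr h).permCongr (blockPerm p q)) + A.cup h 0 x₂ = A.smulr h s₁ x₂ := by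
  simpa [hs, A.H_zero, A.mulee_zero, A.act1_zero] using A.cup_comm1 h s₁ x₂

lemma cup_zero_left (x : B0 q) : A.cup h 0 x = 0 := by
  simpa [A.smul_zero, A.zero_smulr, A.act1_zero] using
    A.act1_smul_add_cup_of_d_eq_zero h (map_zero (A.d p)) x

theorem smulr_comm_of_d_eq_zero {s₁ : B1 p} (hs : A.d p s₁ = 0) (x₂ : B0 q) :
    A.smulr h s₁ x₂ =
      ((-1 : ℤ) ^ (p * q)) • A.smul ((Nat.add_comm q p).trans h) x₂ s₁ := by
  have hcycle : A.d r (A.smul ((Nat.add_comm q p).trans h) x₂ s₁) = 0 := by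
    rw [A.d_smul, hs, A.mul_zero]
  rw [← A.act1_smul_add_cup_of_d_eq_zero h hs, A.cup_zero_left, add_zero,
    A.act1_of_d_eq_zero hcycle, coe_sign_permCongr_blockPerm]

end EInftyQuadraticPairAlgebra

/-- For an E∞-quadratic pair algebra `C`, the ring `h₀C` is graded
commutative: `[x₁·x₂] = (−1)^{n₁n₂}[x₂·x₁]` (the two products differ by a boundary), and
for `s₁ ∈ Ker ∂ ⊆ C_{n₁,1}` and `x₂ ∈ C_{n₂,0}` one has `s₁·x₂ = (−1)^{n₁n₂} x₂·s₁`, so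
the `h₀C`-bimodule `h₁C` is symmetric. -/
theorem eInftyQuadraticPairAlgebra_h0_comm
    {Gt : ℕ → Type*} [∀ n, Group (Gt n)]
    {δ : ∀ n, Gt n →* Equiv.Perm (Fin n)} {ω : ∀ n, Gt n}
    (A : EInftyQuadraticPairAlgebra (B0 := B0) (B1 := B1) (Bee := Bee) Gt δ ω) :
    (∀ (n₁ n₂ : ℕ) (x₁ : B0 n₁) (x₂ : B0 n₂),
      ∃ s : B1 (n₁ + n₂),
        A.mul rfl x₁ x₂ =
          ((-1 : ℤ) ^ (n₁ * n₂)) • A.mul (Nat.add_comm n₂ n₁) x₂ x₁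
            + A.d (n₁ + n₂) s) ∧
    (∀ (n₁ n₂ : ℕ) (s₁ : B1 n₁) (x₂ : B0 n₂), A.d n₁ s₁ = 0 →
      A.smulr rfl s₁ x₂ = ((-1 : ℤ) ^ (n₁ * n₂)) • A.smul (Nat.add_comm n₂ n₁) x₂ s₁) := by
  refine ⟨fun n₁ n₂ x₁ x₂ => ?_, fun n₁ n₂ s₁ x₂ hs => A.smulr_comm_of_d_eq_zero rfl hs x₂⟩
  rw [← A.toH0_eq_iff_exists_d, map_zsmul]
  exact A.toH0_mul_comm rfl x₁ x₂
end

section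
/- Let B be a pair algebra such that (h₀B)_n = 0 for all odd n and (h₁B)_n = 0 for all even n. Let D be the ℕ-graded pair algebra with D_{n,0} = B_{n,0} for n even and D_{n,0} = 0 for n odd, D_{n,1} = B_{n,1} for n even and D_{n,1} = (h₁B)_n for n odd, and boundary ∂_D equal to ∂ in even degrees and 0 in odd degrees (with multiplications restricted from B). Then both of the following morphisms of pair algebras are quasi-isomorphisms, i.e. induce isomorphisms on h₀ and h₁ in every degree: (i) the inclusion D → B (the identity on even-degree parts and the inclusion h₁B = Ker(∂) ⊆ B_{*,1} in odd degrees); and (ii) the morphism D → (0: h₁B → h₀B), where (0: h₁B → h₀B) is the pair algebra with ring h₀B, bimodule h₁B and zero boundary, given on level 1 by 0 on the even-degree part and the identity on the odd-degree part, and on level 0 by the projection B_{n,0} → (h₀B)_n for n even and 0 for n odd. -/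
variable {B0 B1 : ℕ → Type*} [∀ n, AddCommGroup (B0 n)] [∀ n, AddCommGroup (B1 n)]

/-- Degree-`n` level-0 part of the pair algebra `D`: all of `B_{n,0}` for `n` even,
zero for `n` odd. -/
def D0sub (A : PairAlgebra B0 B1) (n : ℕ) : AddSubgroup (B0 n) :=
  if Even n then ⊤ else ⊥

/-- Degree-`n` level-1 part of the pair algebra `D`: all of `B_{n,1}` for `n` even,
`h₁B_n = Ker ∂` for `n` odd. -/
def D1sub (A : PairAlgebra B0 B1) (n : ℕ) : AddSubgroup (B1 n) :=
  if Even n then ⊤ else (A.d n).ker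

/-- The boundary of `D`: equal to `∂` in even degrees and `0` in odd degrees. -/
def dD (A : PairAlgebra B0 B1) (n : ℕ) : ↥(D1sub A n) →+ ↥(D0sub A n) where
  toFun s := ⟨if Even n then A.d n s.1 else 0, by
    by_cases h : Even n <;> simp [D0sub, h]⟩
  map_zero' := by
    ext
    by_cases h : Even n <;> simp [h]
  map_add' s t := by
    ext
    by_cases h : Even n <;> simp [h]

/-- Level-0 part of the morphism `D → (0 : h₁B → h₀B)`: the projection
`B_{n,0} → (h₀B)_n` in even degrees, `0` in odd degrees. -/
def f0D (A : PairAlgebra B0 B1) (n : ℕ) (x : ↥(D0sub A n)) : B0 n ⧸ (A.d n).range :=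
  if Even n then QuotientAddGroup.mk x.1 else 0

/-- Level-1 part of the morphism `D → (0 : h₁B → h₀B)`: zero in even degrees, the
identity on `h₁B_n` in odd degrees. -/
def f1D (A : PairAlgebra B0 B1) (n : ℕ) (s : ↥(D1sub A n)) : ↥((A.d n).ker) :=
  if h : Even n then 0 else ⟨s.1, by
    have hs := s.2
    simp only [D1sub, if_neg h] at hs
    exact hs⟩

section

variable (A : PairAlgebra B0 B1) {n : ℕ}

theorem D0sub_of_even (h : Even n) : D0sub A n = ⊤ := if_pos h

theorem D0sub_of_not_even (h : ¬ Even n) : D0sub A n = ⊥ := if_neg h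

theorem D1sub_of_even (h : Even n) : D1sub A n = ⊤ := if_pos h

theorem D1sub_of_not_even (h : ¬ Even n) : D1sub A n = (A.d n).ker := if_neg h

theorem ker_d_le_D1sub : (A.d n).ker ≤ D1sub A n := by
  by_cases h : Even n
  · exact (D1sub_of_even A h).symm ▸ le_top
  · exact (D1sub_of_not_even A h).ge

theorem coe_dD (t : D1sub A n) : (dD A n t : B0 n) = A.d n t := by
  by_cases h : Even n
  · exact if_pos h
  · have ht : A.d n t = 0 := (D1sub_of_not_even A h).le t.2
    exact (if_neg h).trans ht.symm

theorem dD_eq_zero_iff {t : D1sub A n} : dD A n t = 0 ↔ A.d n t = 0 := by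
  rw [← coe_dD, ZeroMemClass.coe_eq_zero]

theorem f0D_eq_mk (x : D0sub A n) : f0D A n x = QuotientAddGroup.mk (x : B0 n) := by
  by_cases h : Even n
  · exact if_pos h
  · have hx : (x : B0 n) = 0 := (D0sub_of_not_even A h).le x.2
    rw [hx]
    exact if_neg h

theorem f0D_eq_zero_iff {x : D0sub A n} : f0D A n x = 0 ↔ (x : B0 n) ∈ (A.d n).range := by
  rw [f0D_eq_mk, QuotientAddGroup.eq_zero_iff]

theorem coe_f1D_of_d_eq_zero (hinj : Even n → Function.Injective (A.d n)) {t : D1sub A n}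
    (ht : A.d n t = 0) : (f1D A n t : B1 n) = t := by
  by_cases h : Even n
  · have ht0 : (t : B1 n) = 0 := (map_eq_zero_iff _ (hinj h)).mp ht
    simp only [f1D, dif_pos h, ZeroMemClass.coe_zero, ht0]
  · simp only [f1D, dif_neg h]

theorem exists_eq_dD_of_mem_range {x : D0sub A n} (hx : (x : B0 n) ∈ (A.d n).range) :
    ∃ t : D1sub A n, x = dD A n t := by
  by_cases h : Even n
  · obtain ⟨s, hs⟩ := hx
    have hsD : s ∈ D1sub A n := (D1sub_of_even A h).ge (AddSubgroup.mem_top s)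
    exact ⟨⟨s, hsD⟩, Subtype.ext (by rw [coe_dD, hs])⟩
  · have hx0 : (x : B0 n) = 0 := (D0sub_of_not_even A h).le x.2
    exact ⟨0, Subtype.ext (by rw [map_zero, hx0, ZeroMemClass.coe_zero])⟩

theorem exists_eq_D0sub_add_d (hsurj : Odd n → Function.Surjective (A.d n)) (y : B0 n) :
    ∃ (x : D0sub A n) (s : B1 n), y = x + A.d n s := by
  rcases Nat.even_or_odd n with h | h
  · have hy : y ∈ D0sub A n := (D0sub_of_even A h).ge (AddSubgroup.mem_top y)
    exact ⟨⟨y, hy⟩, 0, by rw [map_zero, add_zero]⟩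
  · obtain ⟨s, rfl⟩ := hsurj h y
    exact ⟨0, s, by rw [ZeroMemClass.coe_zero, zero_add]⟩

theorem f0D_surjective (hsurj : Odd n → Function.Surjective (A.d n)) :
    Function.Surjective (f0D A n) := by
  intro y
  obtain ⟨y, rfl⟩ := QuotientAddGroup.mk_surjective y
  obtain ⟨x, s, rfl⟩ := exists_eq_D0sub_add_d A hsurj y
  have hs : A.d n s ∈ (A.d n).range := ⟨s, rfl⟩
  exact ⟨x, by rw [f0D_eq_mk, QuotientAddGroup.mk_add_of_mem _ hs]⟩

theorem exists_dD_eq_zero_coe_eq {s : B1 n} (hs : A.d n s = 0) :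
    ∃ t : D1sub A n, dD A n t = 0 ∧ (t : B1 n) = s :=
  ⟨⟨s, ker_d_le_D1sub A hs⟩, (dD_eq_zero_iff A).mpr hs, rfl⟩

theorem exists_dD_eq_zero_f1D_eq (hinj : Even n → Function.Injective (A.d n)) (s : (A.d n).ker) :
    ∃ t : D1sub A n, dD A n t = 0 ∧ f1D A n t = s := by
  obtain ⟨t, ht, hts⟩ := exists_dD_eq_zero_coe_eq A s.2
  have hf : (f1D A n t : B1 n) = t := coe_f1D_of_d_eq_zero A hinj ((dD_eq_zero_iff A).mp ht)
  exact ⟨t, ht, Subtype.ext (hf.trans hts)⟩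

theorem f1D_injOn_ker_dD (hinj : Even n → Function.Injective (A.d n)) :
    Set.InjOn (f1D A n) (dD A n).ker := by
  intro t ht t' ht' htt'
  have hf {u : D1sub A n} (hu : dD A n u = 0) : (f1D A n u : B1 n) = u :=
    coe_f1D_of_d_eq_zero A hinj ((dD_eq_zero_iff A).mp hu)
  exact Subtype.ext (by rw [← hf ht, ← hf ht', htt'])

end

/-- STATEMENT 16: If `B` is a pair algebra with `(h₀B)_n = 0` for all odd `n` and
`(h₁B)_n = 0` for all even `n`, and `D` is the pair algebra which agrees with `B` in even
degrees and equals `(0 : (h₁B)_n → 0)` in odd degrees, then the inclusion `D → B` and the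
canonical morphism `D → (0 : h₁B → h₀B)` both induce isomorphisms on `h₀` and `h₁` in
every degree (each stated below as injectivity and surjectivity of the induced maps on
`h₀ = Coker ∂` and `h₁ = Ker ∂`). -/
theorem evenPairAlgebra_quasi_isos (A : PairAlgebra B0 B1)
    (hodd : ∀ n : ℕ, Odd n → ∀ x : B0 n, ∃ s : B1 n, x = A.d n s)
    (heven : ∀ n : ℕ, Even n → ∀ s : B1 n, A.d n s = 0 → s = 0) :
    ∀ n : ℕ,
      -- (i) the inclusion D → B is a quasi-isomorphism:
      -- h₀-surjectivity
      ((∀ y : B0 n, ∃ (x : ↥(D0sub A n)) (s : B1 n), y = x.1 + A.d n s) ∧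
      -- h₀-injectivity
      (∀ x : ↥(D0sub A n), (∃ s : B1 n, x.1 = A.d n s) → ∃ t : ↥(D1sub A n), x = dD A n t) ∧
      -- h₁-surjectivity
      (∀ s : B1 n, A.d n s = 0 → ∃ t : ↥(D1sub A n), dD A n t = 0 ∧ t.1 = s) ∧
      -- h₁-injectivity
      (∀ t t' : ↥(D1sub A n), dD A n t = 0 → dD A n t' = 0 → t.1 = t'.1 → t = t')) ∧
      -- (ii) the morphism D → (0 : h₁B → h₀B) is a quasi-isomorphism:
      -- h₀-surjectivity
      ((∀ y : B0 n ⧸ (A.d n).range, ∃ x : ↥(D0sub A n), f0D A n x = y) ∧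
      -- h₀-injectivity
      (∀ x : ↥(D0sub A n), f0D A n x = 0 → ∃ t : ↥(D1sub A n), x = dD A n t) ∧
      -- h₁-surjectivity
      (∀ s : ↥((A.d n).ker), ∃ t : ↥(D1sub A n), dD A n t = 0 ∧ f1D A n t = s) ∧
      -- h₁-injectivity
      (∀ t t' : ↥(D1sub A n), dD A n t = 0 → dD A n t' = 0 →
        f1D A n t = f1D A n t' → t = t')) := by
  intro n
  have hsurj (hn : Odd n) : Function.Surjective (A.d n) := fun x =>
    (hodd n hn x).imp fun _ hs => hs.symm
  have hinj (hn : Even n) : Function.Injective (A.d n) :=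
    (injective_iff_map_eq_zero _).mpr (heven n hn)
  refine ⟨⟨exists_eq_D0sub_add_d A hsurj, ?_, ?_, ?_⟩, f0D_surjective A hsurj, ?_, ?_, ?_⟩
  · rintro x ⟨s, hs⟩
    exact exists_eq_dD_of_mem_range A ⟨s, hs.symm⟩
  · exact fun s hs => exists_dD_eq_zero_coe_eq A hs
  · exact fun t t' _ _ htt' => Subtype.ext htt'
  · exact fun x hx => exists_eq_dD_of_mem_range A ((f0D_eq_zero_iff A).mp hx)
  · exact exists_dD_eq_zero_f1D_eq A hinj
  · exact fun t t' ht ht' htt' => f1D_injOn_ker_dD A hinj ht ht' htt'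
end
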